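/- arXiv:math/0603539 — 2 statements merged into one kernel-verified Lean document; each statement's English description precedes it below -/
import Mathlib

section
/- Let (X,d) be a metric space, U ⊆ ℝᵏ open, and φ : U → X Lipschitz. Then for almost every z ∈ U the function v ↦ md φ_z(v) is a seminorm on ℝᵏ: it exists for all v ∈ ℝᵏ, is nonnegative, satisfies md φ_z(sv) = |s|·md φ_z(v) for all s ∈ ℝ and v ∈ ℝᵏ, and md φ_z(v + w) ≤ md φ_z(v) + md φ_z(w) for all v, w ∈ ℝᵏ. -/
/-!
The image `φ(U)` is separable, so the Kuratowski embedding together with coordinatewise Lipschitz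
extension replaces `φ` by a Lipschitz map `G : ℝᵏ → ℓ^∞(ℕ, ℝ)` with the same distances on `U`
(`exists_lp_model`). By Rademacher's theorem almost every `z` is a point of differentiability of
all coordinates `G_n`, and the metric differential at `z` is shown to be the seminorm
`N_z(v) = sup_n |D G_n(z) v|`.

For a fixed `v`, the lower bound `liminf ‖G(z + r v) - G(z)‖ / r ≥ N_z(v)` is immediate from each
coordinate. For the upper bound, the fundamental theorem of calculus on a line parallel to `v`
gives `‖G(z + r v) - G(z)‖ ≤ ∫₀ʳ N_{z + s v}(v) ds`, and Lebesgue's differentiation theorem shows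
that the average of the integrand tends to `N_z(v)` at almost every point of the line
(`ae_tendsto_metric_speed`). Fubini makes this hold for almost every `z`
(`ae_tendsto_directional`). Finally, both the difference quotients and `N_z` are Lipschitz in `v`,
so a countable dense set of directions suffices (`tendsto_of_dense_directions`).
-/

/-- The metric directional derivative of `φ` at `z` in direction `v` is the limit
`lim_{r → 0⁺} d(φ(z + r v), φ z) / r`; `HasMDDerivAt φ z v L` says it exists and equals `L`. -/
def HasMDDerivAt {X : Type*} [MetricSpace X] {k : ℕ}
    (φ : EuclideanSpace ℝ (Fin k) → X) (z v : EuclideanSpace ℝ (Fin k)) (L : ℝ) : Prop :=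
  Filter.Tendsto (fun r : ℝ => dist (φ (z + r • v)) (φ z) / r)
    (nhdsWithin 0 (Set.Ioi 0)) (nhds L)

open MeasureTheory Set Filter Topology
open scoped NNReal ENNReal lp

lemma lipschitz_coord {α : Type*} [PseudoMetricSpace α] {K : ℝ≥0} {H : α → ℓ^∞(ℕ, ℝ)}
    (hH : LipschitzWith K H) (n : ℕ) : LipschitzWith K (fun s => H s n) :=
  (LipschitzWith.coordinate K).1 hH n

lemma abs_coord_sub_le (a b : ℓ^∞(ℕ, ℝ)) (n : ℕ) : |a n - b n| ≤ ‖a - b‖ := by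
  simpa using lp.norm_apply_le_norm ENNReal.top_ne_zero (a - b) n

lemma bddAbove_abs_deriv {K : ℝ≥0} {H : ℝ → ℓ^∞(ℕ, ℝ)} (hH : LipschitzWith K H) (t : ℝ) :
    BddAbove (range fun n => |deriv (fun s => H s n) t|) := by
  refine ⟨K, ?_⟩
  rintro - ⟨n, rfl⟩
  exact norm_deriv_le_of_lipschitz (lipschitz_coord hH n)

lemma locallyIntegrable_iSup_abs_deriv {K : ℝ≥0} {H : ℝ → ℓ^∞(ℕ, ℝ)}
    (hH : LipschitzWith K H) :
    LocallyIntegrable (fun t => ⨆ n, |deriv (fun s => H s n) t|) volume := by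
  have hm : Measurable (fun t => ⨆ n, |deriv (fun s => H s n) t|) :=
    Measurable.iSup fun n => (measurable_deriv _).abs
  refine (memLp_top_of_bound hm.aestronglyMeasurable (K : ℝ) (.of_forall fun t => ?_)
    : MemLp _ ∞ volume).locallyIntegrable le_top
  rw [Real.norm_of_nonneg (Real.iSup_nonneg fun n => abs_nonneg _)]
  exact ciSup_le fun n => norm_deriv_le_of_lipschitz (lipschitz_coord hH n)

/-- The increment of an `ℓ^∞`-valued Lipschitz curve is at most the integral of the supremum of
the speeds of its coordinates. -/
lemma norm_increment_le_integral {K : ℝ≥0} {H : ℝ → ℓ^∞(ℕ, ℝ)} (hH : LipschitzWith K H)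
    (t r : ℝ) (hr : 0 ≤ r) :
    ‖H (t + r) - H t‖ ≤ ∫ s in t..(t + r), ⨆ n, |deriv (fun s => H s n) s| := by
  have hle : t ≤ t + r := by linarith
  have hM : IntervalIntegrable (fun t => ⨆ n, |deriv (fun s => H s n) t|) volume t (t + r) :=
    (intervalIntegrable_iff_integrableOn_Icc_of_le hle).2
      ((locallyIntegrable_iSup_abs_deriv hH).integrableOn_isCompact isCompact_Icc)
  refine lp.norm_le_of_forall_le
    (intervalIntegral.integral_nonneg hle fun u _ => Real.iSup_nonneg fun n => abs_nonneg _)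
    fun n => ?_
  have hac : AbsolutelyContinuousOnInterval (fun s => H s n) t (t + r) :=
    ((lipschitz_coord hH n).lipschitzOnWith (s := uIcc t (t + r))).absolutelyContinuousOnInterval
  have h1 := hac.integral_deriv_eq_sub
  calc ‖(H (t + r) - H t : ℓ^∞(ℕ, ℝ)) n‖ = ‖∫ s in t..(t + r), deriv (fun s => H s n) s‖ := by
        rw [h1]; rfl
    _ ≤ ∫ s in t..(t + r), ‖deriv (fun s => H s n) s‖ :=
        intervalIntegral.norm_integral_le_integral_norm hle
    _ ≤ _ := by
        refine intervalIntegral.integral_mono_on hle hac.intervalIntegrable_deriv.norm hM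
          fun u _ => ?_
        exact le_ciSup (bddAbove_abs_deriv hH u) n

/-- Metric differentiability of Lipschitz curves: almost everywhere the metric speed of an
`ℓ^∞`-valued Lipschitz curve is the supremum of the speeds of its coordinates. -/
lemma ae_tendsto_metric_speed {K : ℝ≥0} {H : ℝ → ℓ^∞(ℕ, ℝ)} (hH : LipschitzWith K H) :
    ∀ᵐ t : ℝ, Tendsto (fun r => ‖H (t + r) - H t‖ / r) (𝓝[>] 0)
      (𝓝 (⨆ n, |deriv (fun s => H s n) t|)) := by
  have hd : ∀ᵐ t : ℝ, ∀ n, DifferentiableAt ℝ (fun s => H s n) t :=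
    ae_all_iff.2 fun n => (lipschitz_coord hH n).ae_differentiableAt_real
  filter_upwards [hd,
    LocallyIntegrable.ae_hasDerivAt_integral (locallyIntegrable_iSup_abs_deriv hH)]
    with t ht hint
  have hsub : 𝓝[>] (0 : ℝ) ≤ 𝓝[≠] 0 := nhdsWithin_mono _ fun x hx => ne_of_gt hx
  refine tendsto_order.2 ⟨fun a ha => ?_, fun a ha => ?_⟩
  -- Lower bound: a single coordinate already moves faster than `a`.
  · obtain ⟨n, hn⟩ := exists_lt_of_lt_ciSup ha
    have h1 := ((hasDerivAt_iff_tendsto_slope_zero.1 (ht n).hasDerivAt).mono_left hsub).abs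
    filter_upwards [h1.eventually_const_lt hn, self_mem_nhdsWithin] with r hr hr0
    have hr0 : 0 < r := hr0
    refine hr.trans_le ?_
    rw [smul_eq_mul, abs_mul, abs_inv, abs_of_pos hr0, div_eq_inv_mul]
    gcongr
    exact abs_coord_sub_le _ _ n
  -- Upper bound: Lebesgue differentiation of the integral bounding the increment.
  · have h1 := (hasDerivAt_iff_tendsto_slope_zero.1 (hint t)).mono_left hsub
    filter_upwards [h1.eventually_lt_const ha, self_mem_nhdsWithin] with r hr hr0
    have hr0 : 0 < r := hr0
    refine lt_of_le_of_lt ?_ hr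
    rw [smul_eq_mul, intervalIntegral.integral_same, sub_zero, div_eq_inv_mul]
    gcongr
    exact norm_increment_le_integral hH t r hr0.le

section

variable {E : Type*} [NormedAddCommGroup E] [NormedSpace ℝ E]

/-- A one-sided limit at `0` spelled out with countably many tolerances. -/
lemma tendsto_nhdsGT_zero_iff_nat (q : ℝ → ℝ) (L : ℝ) :
    Tendsto q (𝓝[>] 0) (𝓝 L) ↔ ∀ m : ℕ, ∃ j : ℕ, ∀ r : ℝ, 0 < r → r < 1 / ((j : ℝ) + 1) →
      |q r - L| ≤ 1 / ((m : ℝ) + 1) := by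
  constructor
  · intro h m
    have h1 := h.eventually (Metric.closedBall_mem_nhds L (Nat.one_div_pos_of_nat (n := m)))
    obtain ⟨δ, hδ, h2⟩ := (mem_nhdsGT_iff_exists_Ioo_subset).1 h1
    obtain ⟨j, hj⟩ := exists_nat_one_div_lt (show (0 : ℝ) < δ from hδ)
    refine ⟨j, fun r hr hrj => ?_⟩
    simpa [Real.dist_eq] using h2 ⟨hr, hrj.trans hj⟩
  · intro h
    refine Metric.tendsto_nhds.2 fun ε hε => ?_
    obtain ⟨m, hm⟩ := exists_nat_one_div_lt hε
    obtain ⟨j, hj⟩ := h m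
    filter_upwards [Ioo_mem_nhdsGT (Nat.one_div_pos_of_nat (α := ℝ) (n := j))] with r hr
    rw [Real.dist_eq]
    exact (hj r hr.1 hr.2).trans_lt hm

/-- The set of points where the metric directional derivative exists with prescribed measurable
value is measurable: for fixed tolerances it is the preimage of a closed set of pairs
`(z, a)` under `z ↦ (z, N z)`. -/
lemma measurableSet_tendsto_quotient [MeasurableSpace E] [BorelSpace E]
    [SecondCountableTopology E] {F : Type*}
    [NormedAddCommGroup F] {G : E → F} (hG : Continuous G) (v : E) {N : E → ℝ}
    (hN : Measurable N) :
    MeasurableSet {z | Tendsto (fun r : ℝ => ‖G (z + r • v) - G z‖ / r) (𝓝[>] 0)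
      (𝓝 (N z))} := by
  have hset : {z | Tendsto (fun r : ℝ => ‖G (z + r • v) - G z‖ / r) (𝓝[>] 0) (𝓝 (N z))} =
      ⋂ m : ℕ, ⋃ j : ℕ, (fun z => (z, N z)) ⁻¹' (⋂ (r : ℝ) (_ : 0 < r)
        (_ : r < 1 / ((j : ℝ) + 1)),
        {p : E × ℝ | |‖G (p.1 + r • v) - G p.1‖ / r - p.2| ≤ 1 / ((m : ℝ) + 1)}) := by
    ext z
    simp only [mem_ofPred_eq, tendsto_nhdsGT_zero_iff_nat, mem_iInter, mem_iUnion, mem_preimage]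
  rw [hset]
  refine MeasurableSet.iInter fun m => MeasurableSet.iUnion fun j =>
    (measurable_id.prodMk hN) (IsClosed.measurableSet ?_)
  refine isClosed_iInter fun r => isClosed_iInter fun hr => isClosed_iInter fun _ => ?_
  exact isClosed_le (by fun_prop) continuous_const

/-- For a fixed direction `v`, Fubini along the lines parallel to `v` turns the statement about
curves into one about almost every point of the space. -/
lemma ae_tendsto_directional [FiniteDimensional ℝ E] [MeasurableSpace E] [BorelSpace E]
    (μ : Measure E) [μ.IsAddHaarMeasure] {K : ℝ≥0} {G : E → ℓ^∞(ℕ, ℝ)}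
    (hG : LipschitzWith K G) (v : E) :
    ∀ᵐ z ∂μ, Tendsto (fun r : ℝ => ‖G (z + r • v) - G z‖ / r) (𝓝[>] 0)
      (𝓝 (⨆ n, |lineDeriv ℝ (fun x => G x n) z v|)) := by
  have hN : Measurable fun z => ⨆ n, |lineDeriv ℝ (fun x => G x n) z v| :=
    Measurable.iSup fun n => (measurable_lineDeriv (lipschitz_coord hG n).continuous).abs
  let L : ℝ →L[ℝ] E := ContinuousLinearMap.smulRight (1 : ℝ →L[ℝ] ℝ) v
  refine ae_mem_of_ae_add_linearMap_mem L.toLinearMap volume μ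
    (measurableSet_tendsto_quotient hG.continuous v hN) fun p => ?_
  have hH : LipschitzWith _ fun t : ℝ => G (p + t • v) :=
    hG.comp ((LipschitzWith.const p).add L.lipschitz)
  filter_upwards [ae_tendsto_metric_speed hH] with t ht
  change Tendsto (fun r : ℝ => ‖G (p + t • v + r • v) - G (p + t • v)‖ / r) (𝓝[>] 0)
      (𝓝 (⨆ n, |lineDeriv ℝ (fun x => G x n) (p + t • v) v|))
  have hline : ∀ n, lineDeriv ℝ (fun x => G x n) (p + t • v) v
      = deriv (fun s : ℝ => G (p + s • v) n) t := fun n => by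
    have := deriv_comp_const_add (fun s : ℝ => G (p + s • v) n) t 0
    rw [add_zero] at this
    rw [← this, lineDeriv]
    simp only [add_smul, add_assoc]
  simpa only [hline, add_smul, add_assoc] using ht

/-- Since difference quotients and the candidate limit are Lipschitz in the direction, convergence
for a dense set of directions gives convergence for all directions. -/
lemma tendsto_of_dense_directions {F : Type*} [NormedAddCommGroup F] {K : ℝ≥0} {G : E → F}
    (hG : LipschitzWith K G) {N : E → ℝ} (hN : ∀ v w, |N v - N w| ≤ K * ‖v - w‖)
    {S : Set E} (hS : Dense S) (z : E)
    (h : ∀ v ∈ S, Tendsto (fun r : ℝ => ‖G (z + r • v) - G z‖ / r) (𝓝[>] 0) (𝓝 (N v)))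
    (v : E) : Tendsto (fun r : ℝ => ‖G (z + r • v) - G z‖ / r) (𝓝[>] 0) (𝓝 (N v)) := by
  refine Metric.tendsto_nhds.2 fun ε hε => ?_
  have hη : 0 < ε / (3 * (K + 1)) := by positivity
  obtain ⟨w, hwS, hw⟩ := hS.exists_dist_lt v hη
  have hKw : K * ‖v - w‖ < ε / 3 := by
    rw [dist_eq_norm, lt_div_iff₀ (by positivity)] at hw
    have := norm_nonneg (v - w)
    nlinarith [K.coe_nonneg]
  filter_upwards [Metric.tendsto_nhds.1 (h w hwS) (ε / 3) (by positivity), self_mem_nhdsWithin]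
    with r hr hr0
  have hr0 : 0 < r := hr0
  have hq : |‖G (z + r • v) - G z‖ / r - ‖G (z + r • w) - G z‖ / r| ≤ K * ‖v - w‖ := by
    rw [← sub_div, abs_div, abs_of_pos hr0, div_le_iff₀ hr0]
    calc |‖G (z + r • v) - G z‖ - ‖G (z + r • w) - G z‖|
        ≤ ‖(G (z + r • v) - G z) - (G (z + r • w) - G z)‖ := abs_norm_sub_norm_le _ _
      _ = dist (G (z + r • v)) (G (z + r • w)) := by rw [dist_eq_norm]; congr 1; abel
      _ ≤ K * dist (z + r • v) (z + r • w) := hG.dist_le_mul _ _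
      _ = K * ‖v - w‖ * r := by
          rw [dist_add_left, dist_eq_norm, ← smul_sub, norm_smul, Real.norm_of_nonneg hr0.le]
          ring
  rw [Real.dist_eq] at hr ⊢
  have h3 := hN w v
  rw [norm_sub_rev] at h3
  rw [abs_le] at hq h3
  rw [abs_lt] at hr ⊢
  constructor <;> linarith [hq.1, hq.2, h3.1, h3.2, hr.1, hr.2]

/-- Metric differentiability almost everywhere for `ℓ^∞`-valued Lipschitz maps; the metric
differential is the seminorm `v ↦ sup_n |D G_n(z) v|`. -/
lemma ae_exists_seminorm [FiniteDimensional ℝ E] [MeasurableSpace E] [BorelSpace E]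
    (μ : Measure E) [μ.IsAddHaarMeasure] {K : ℝ≥0} {G : E → ℓ^∞(ℕ, ℝ)}
    (hG : LipschitzWith K G) :
    ∀ᵐ z ∂μ, ∃ N : E → ℝ,
      (∀ v, Tendsto (fun r : ℝ => ‖G (z + r • v) - G z‖ / r) (𝓝[>] 0) (𝓝 (N v))) ∧
      (∀ v, 0 ≤ N v) ∧
      (∀ (s : ℝ) (v), N (s • v) = |s| * N v) ∧
      (∀ v w, N (v + w) ≤ N v + N w) := by
  obtain ⟨S, hSc, hSd⟩ := TopologicalSpace.exists_countable_dense E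
  have h1 : ∀ᵐ z ∂μ, ∀ v ∈ S, Tendsto (fun r : ℝ => ‖G (z + r • v) - G z‖ / r) (𝓝[>] 0)
      (𝓝 (⨆ n, |lineDeriv ℝ (fun x => G x n) z v|)) :=
    (ae_ball_iff hSc).2 fun v _ => ae_tendsto_directional μ hG v
  have h2 : ∀ᵐ z ∂μ, ∀ n, DifferentiableAt ℝ (fun x => G x n) z :=
    ae_all_iff.2 fun n => (lipschitz_coord hG n).ae_differentiableAt
  filter_upwards [h1, h2] with z hz hd
  let A : ℕ → E →L[ℝ] ℝ := fun n => fderiv ℝ (fun x => G x n) z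
  let N : E → ℝ := fun v => ⨆ n, |A n v|
  have hA : ∀ n v, |A n v| ≤ K * ‖v‖ := fun n v =>
    (A n).le_of_opNorm_le (norm_fderiv_le_of_lipschitz ℝ (lipschitz_coord hG n)) v
  have hbdd : ∀ v, BddAbove (range fun n => |A n v|) := fun v =>
    ⟨K * ‖v‖, by rintro - ⟨n, rfl⟩; exact hA n v⟩
  have hadd : ∀ v w, N (v + w) ≤ N v + N w := fun v w => ciSup_le fun n => by
    rw [map_add]
    exact (abs_add_le _ _).trans (add_le_add (le_ciSup (hbdd v) n) (le_ciSup (hbdd w) n))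
  have hNK : ∀ v, N v ≤ K * ‖v‖ := fun v => ciSup_le fun n => hA n v
  have hNlip : ∀ v w, |N v - N w| ≤ K * ‖v - w‖ := fun v w => by
    have e1 := hadd (v - w) w
    have e2 := hadd (w - v) v
    have e3 := hNK (v - w)
    have e4 := hNK (w - v)
    rw [sub_add_cancel] at e1 e2
    rw [norm_sub_rev] at e4
    rw [abs_le]
    constructor <;> linarith
  refine ⟨N, tendsto_of_dense_directions hG hNlip hSd z fun v hv => ?_,
    fun v => Real.iSup_nonneg fun n => abs_nonneg _, fun s v => ?_, hadd⟩
  · simpa only [(hd _).lineDeriv_eq_fderiv] using hz v hv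
  · simp only [N, map_smul, smul_eq_mul, abs_mul]
    rw [Real.mul_iSup_of_nonneg (abs_nonneg s)]

/-- A Lipschitz map on a subset of a separable space agrees there, as far as distances are
concerned, with a globally defined `ℓ^∞`-valued Lipschitz map: compose with the Kuratowski
embedding of the (separable) image and extend coordinatewise. -/
lemma exists_lp_model {α X : Type*} [PseudoMetricSpace α] [SecondCountableTopology α]
    [MetricSpace X] {U : Set α} {φ : α → X} {K : ℝ≥0} (hφ : LipschitzOnWith K φ U) :
    ∃ G : α → ℓ^∞(ℕ, ℝ), LipschitzWith K G ∧
      ∀ x ∈ U, ∀ y ∈ U, ‖G x - G y‖ = dist (φ x) (φ y) := by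
  classical
  have hsep : TopologicalSpace.IsSeparable (φ '' U) := by
    rw [← range_domRestrict]
    exact TopologicalSpace.isSeparable_range hφ.continuousOn.domRestrict
  have : TopologicalSpace.SeparableSpace (φ '' U) := hsep.separableSpace
  let F : α → ℓ^∞(ℕ, ℝ) := fun x =>
    if h : x ∈ U then kuratowskiEmbedding (φ '' U) ⟨φ x, mem_image_of_mem φ h⟩ else 0
  have hF : ∀ x ∈ U, ∀ y ∈ U, dist (F x) (F y) = dist (φ x) (φ y) := fun x hx y hy => by
    simp only [F, dif_pos hx, dif_pos hy]
    exact (kuratowskiEmbedding.isometry (φ '' U)).dist_eq _ _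
  obtain ⟨G, hG, hFG⟩ := LipschitzOnWith.extend_lp_infty (f := F) (s := U) (K := K)
    (LipschitzOnWith.of_dist_le_mul fun x hx y hy => by
      rw [hF x hx y hy]; exact hφ.dist_le_mul x hx y hy)
  refine ⟨G, hG, fun x hx y hy => ?_⟩
  rw [← hFG hx, ← hFG hy, ← dist_eq_norm, hF x hx y hy]

end

theorem md_is_seminorm_ae {X : Type*} [MetricSpace X] (k : ℕ)
    (U : Set (EuclideanSpace ℝ (Fin k))) (hU : IsOpen U)
    (φ : EuclideanSpace ℝ (Fin k) → X) (K : NNReal) (hφ : LipschitzOnWith K φ U) :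
    ∀ᵐ z ∂(MeasureTheory.volume.restrict U),
      ∃ N : EuclideanSpace ℝ (Fin k) → ℝ,
        (∀ v, HasMDDerivAt φ z v (N v)) ∧
        (∀ v, 0 ≤ N v) ∧
        (∀ (s : ℝ) (v), N (s • v) = |s| * N v) ∧
        (∀ v w, N (v + w) ≤ N v + N w) := by
  obtain ⟨G, hG, hdist⟩ := exists_lp_model hφ
  filter_upwards [ae_restrict_of_ae (ae_exists_seminorm volume hG),
    ae_restrict_mem hU.measurableSet] with z ⟨N, hN, hrest⟩ hz
  refine ⟨N, fun v => (hN v).congr' ?_, hrest⟩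
  have hcont : Tendsto (fun r : ℝ => z + r • v) (𝓝[>] 0) (𝓝 z) := by
    have : Continuous fun r : ℝ => z + r • v := by fun_prop
    simpa using (this.tendsto 0).mono_left nhdsWithin_le_nhds
  filter_upwards [hcont.eventually (hU.mem_nhds hz)] with r hr
  rw [hdist _ hr _ hz]
end

section
/- Let (X,d) be a geodesic metric space. Suppose that for every Lipschitz curve γ:[0,1]→X with γ(0)=γ(1) and all Lipschitz functions f, π : X → ℝ one has ∫₀¹ (f∘γ)(t)·(π∘γ)'(t) dt = 0, where (π∘γ)' is the almost-everywhere defined derivative of the Lipschitz function π∘γ. Then X is uniquely geodesic: any two constant-speed geodesics c₁, c₂ : [0,1] → X with c₁(0) = c₂(0) and c₁(1) = c₂(1) satisfy c₁(t) = c₂(t) for all t ∈ [0,1]. -/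
/-!
If `c₁ t₀ ≠ c₂ t₀`, run the loop `γ` along `c₁` and back along `c₂`, take `p = dist x ·` and let `f`
be the tent function `z ↦ max 0 (r - dist z (c₁ t₀))` with `r = dist (c₁ t₀) (c₂ t₀) / 2`.
Since `p (c₂ s) = dist x y * s` and `p (c₁ t₀) = dist x y * t₀`, the function `p` being 1-Lipschitz
gives `dist (c₂ s) (c₂ t₀) ≤ dist (c₂ s) (c₁ t₀)`; hence `c₂` stays at distance at least `r` from
`c₁ t₀` and `f` vanishes on it. Along `c₁` the function `p` grows at constant positive speed, so the
loop integral is a positive multiple of the integral of a continuous nonnegative function that is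
positive at one point, contradicting its vanishing.
-/

/-- A constant-speed geodesic from `x` to `y`, parameterized on `[0,1]`. -/
def IsGeodesicSegment {X : Type*} [MetricSpace X] (c : ℝ → X) (x y : X) : Prop :=
  c 0 = x ∧ c 1 = y ∧
    ∀ s ∈ Set.Icc (0:ℝ) 1, ∀ t ∈ Set.Icc (0:ℝ) 1,
      dist (c s) (c t) = dist x y * |s - t|

/-- A metric space is geodesic if any two points are joined by a constant-speed geodesic. -/
def IsGeodesicSpace (X : Type*) [MetricSpace X] : Prop :=
  ∀ x y : X, ∃ c : ℝ → X, IsGeodesicSegment c x y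

/-- The loop that follows `c₁` on `[0, 1/2]` and `c₂` backwards on `[1/2, 1]`. -/
noncomputable def geodesicLoop {X : Type*} (c₁ c₂ : ℝ → X) (t : ℝ) : X :=
  if t ≤ 1 / 2 then c₁ (2 * t) else c₂ (2 - 2 * t)

lemma geodesicLoop_lipschitz {X : Type*} [MetricSpace X] {c₁ c₂ : ℝ → X} {x y : X}
    (h₁ : IsGeodesicSegment c₁ x y) (h₂ : IsGeodesicSegment c₂ x y) :
    LipschitzOnWith (2 * nndist x y) (geodesicLoop c₁ c₂) (Set.Icc 0 1) := by
  obtain ⟨-, h11, h1d⟩ := h₁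
  obtain ⟨-, h21, h2d⟩ := h₂
  have key : ∀ s ∈ Set.Icc (0:ℝ) 1, ∀ t ∈ Set.Icc (0:ℝ) 1, s ≤ t →
      dist (geodesicLoop c₁ c₂ s) (geodesicLoop c₁ c₂ t) ≤ 2 * dist x y * (t - s) := by
    rintro s ⟨hs0, hs1⟩ t ⟨ht0, ht1⟩ hst
    unfold geodesicLoop
    split_ifs with hs ht ht
    · rw [h1d _ ⟨by linarith, by linarith⟩ _ ⟨by linarith, by linarith⟩,
        abs_of_nonpos (by linarith)]
      linarith
    · push Not at ht
      -- The two points lie on different arcs, which meet at `y`.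
      have e1 := h1d (2 * s) ⟨by linarith, by linarith⟩ 1 ⟨by linarith, by linarith⟩
      have e2 := h2d 1 ⟨by linarith, by linarith⟩ (2 - 2 * t) ⟨by linarith, by linarith⟩
      rw [h11, abs_of_nonpos (by linarith)] at e1
      rw [h21, abs_of_nonneg (by linarith)] at e2
      have := dist_triangle (c₁ (2 * s)) y (c₂ (2 - 2 * t))
      rw [e1, e2] at this
      linarith
    · linarith
    · push Not at hs
      rw [h2d _ ⟨by linarith, by linarith⟩ _ ⟨by linarith, by linarith⟩,
        abs_of_nonneg (by linarith)]
      linarith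
  refine LipschitzOnWith.of_dist_le_mul fun s hs t ht => ?_
  push_cast
  rw [Real.dist_eq]
  rcases le_total s t with hst | hst
  · rw [abs_of_nonpos (by linarith), neg_sub]
    exact key s hs t ht hst
  · rw [abs_of_nonneg (by linarith), dist_comm]
    exact key t ht s hs hst

lemma IsGeodesicSegment.dist_left {X : Type*} [MetricSpace X] {c : ℝ → X} {x y : X}
    (hc : IsGeodesicSegment c x y) {t : ℝ} (ht : t ∈ Set.Icc (0:ℝ) 1) :
    dist x (c t) = dist x y * t := by
  have := hc.2.2 0 ⟨le_rfl, zero_le_one⟩ t ht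
  rwa [hc.1, zero_sub, abs_neg, abs_of_nonneg ht.1] at this

/-- A point of `c₂` is at least as far from `c₁ t` as from `c₂ t`, because `c₁ t` and `c₂ t` have
the same distance to the common starting point. -/
lemma IsGeodesicSegment.dist_le {X : Type*} [MetricSpace X] {c₁ c₂ : ℝ → X} {x y : X}
    (h₁ : IsGeodesicSegment c₁ x y) (h₂ : IsGeodesicSegment c₂ x y) {s t : ℝ}
    (hs : s ∈ Set.Icc (0:ℝ) 1) (ht : t ∈ Set.Icc (0:ℝ) 1) :
    dist (c₂ s) (c₂ t) ≤ dist (c₂ s) (c₁ t) := by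
  have h := abs_dist_sub_le (c₂ s) (c₁ t) x
  rwa [dist_comm _ x, dist_comm _ x, h₂.dist_left hs, h₁.dist_left ht, ← mul_sub, abs_mul,
    abs_of_nonneg dist_nonneg, ← h₂.2.2 s hs t ht] at h

theorem uniquely_geodesic_of_loop_integrals_vanish {X : Type*} [MetricSpace X]
    (hgeo : IsGeodesicSpace X)
    (h : ∀ (γ : ℝ → X) (K : NNReal), LipschitzOnWith K γ (Set.Icc 0 1) → γ 0 = γ 1 →
      ∀ (f p : X → ℝ) (Kf Kp : NNReal), LipschitzWith Kf f → LipschitzWith Kp p →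
        ∫ t in (0:ℝ)..1, f (γ t) * deriv (p ∘ γ) t = 0)
    (c₁ c₂ : ℝ → X) (x y : X)
    (h₁ : IsGeodesicSegment c₁ x y) (h₂ : IsGeodesicSegment c₂ x y) :
    ∀ t ∈ Set.Icc (0:ℝ) 1, c₁ t = c₂ t := by
  intro t₀ ht₀
  by_contra hne
  have hD : 0 < dist x y := by
    rcases (dist_nonneg (x := x) (y := y)).eq_or_lt with h0 | h0
    · have e1 := h₁.dist_left ht₀
      have e2 := h₂.dist_left ht₀
      rw [← h0, zero_mul, dist_eq_zero] at e1 e2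
      exact absurd (e1.symm.trans e2) hne
    · exact h0
  set γ := geodesicLoop c₁ c₂ with hγ
  set r : ℝ := dist (c₁ t₀) (c₂ t₀) / 2 with hr
  have hr0 : 0 < r := by have := dist_pos.2 hne; positivity
  set f : X → ℝ := fun z => max 0 (r - dist z (c₁ t₀)) with hf
  have hfL : LipschitzWith 1 f := by
    refine LipschitzWith.const_max ?_ 0
    refine LipschitzWith.of_le_add fun a b => ?_
    have := dist_triangle b a (c₁ t₀)
    rw [dist_comm b a] at this
    linarith
  have hγL := geodesicLoop_lipschitz h₁ h₂
  have hγ01 : γ 0 = γ 1 := by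
    simp only [hγ, geodesicLoop]
    norm_num
    rw [h₁.1, h₂.1]
  have hf2 : ∀ s ∈ Set.Icc (0:ℝ) 1, f (c₂ s) = 0 := by
    intro s hs
    have a := h₁.dist_le h₂ hs ht₀
    have b := dist_triangle_left (c₁ t₀) (c₂ t₀) (c₂ s)
    exact max_eq_left (by linarith)
  have hint := h γ _ hγL hγ01 f (fun z => dist x z) 1 1 hfL (LipschitzWith.dist_right x)
  have hcongr : ∫ t in (0:ℝ)..1, f (γ t) * deriv ((fun z => dist x z) ∘ γ) t
      = ∫ t in (0:ℝ)..1, f (γ t) * (2 * dist x y) := by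
    apply intervalIntegral.integral_congr_ae
    filter_upwards [MeasureTheory.ae_iff.2 (show MeasureTheory.volume {t : ℝ | ¬ t ≠ 1 / 2} = 0 by simp)] with t ht htm
    rw [Set.uIoc_of_le zero_le_one] at htm
    rcases lt_or_gt_of_ne ht with hlt | hgt
    · have hloc : (fun z => dist x z) ∘ γ =ᶠ[nhds t] fun u => 2 * dist x y * u := by
        filter_upwards [Ioo_mem_nhds htm.1 hlt] with u hu
        have : γ u = c₁ (2 * u) := if_pos hu.2.le
        simp only [Function.comp, this]
        rw [h₁.dist_left ⟨by linarith [hu.1], by linarith [hu.2]⟩]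
        ring
      rw [hloc.deriv_eq, deriv_const_mul_field, deriv_id'']
      ring
    · have : γ t = c₂ (2 - 2 * t) := if_neg (not_le.2 hgt)
      rw [this, hf2 _ ⟨by linarith [htm.2], by linarith⟩]
      ring
  rw [hcongr] at hint
  refine absurd hint (ne_of_gt ?_)
  refine intervalIntegral.integral_pos zero_lt_one
    ((hfL.continuous.comp_continuousOn hγL.continuousOn).mul continuousOn_const)
    (fun t _ => mul_nonneg (le_max_left _ _) (by positivity))
    ⟨t₀ / 2, ⟨by linarith [ht₀.1], by linarith [ht₀.2]⟩, mul_pos ?_ (by positivity)⟩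
  have : γ (t₀ / 2) = c₁ t₀ := by
    rw [hγ, geodesicLoop, if_pos (by linarith [ht₀.2]), mul_div_cancel₀ _ two_ne_zero]
  rw [this]
  simpa [hf] using hr0
end
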